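/- arXiv:2601.13805 — 2 statements merged into one kernel-verified Lean document; each statement's English description precedes it below -/
import Mathlib

section
/- Let I be an ideal on ℕ, let X be a regular topological space, let 𝓕 be a rough family on X, and let x : ℕ → X be a sequence such that {n : x n ∉ K} ∈ I for some compact set K ⊆ X. Then Γ_x(I,𝓕) ⊆ {η ∈ X : closure(F_η) ∩ Γ_x(I) ≠ ∅}. -/
open Set Filter Topology Metric

def IsIdeal (I : Set (Set ℕ)) : Prop :=
  (∀ A B : Set ℕ, A ⊆ B → B ∈ I → A ∈ I) ∧
  (∀ A B : Set ℕ, A ∈ I → B ∈ I → A ∪ B ∈ I) ∧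
  (∀ A : Set ℕ, A.Finite → A ∈ I) ∧
  (Set.univ : Set ℕ) ∉ I

def IsRoughFamily {X : Type*} (F : X → Set X) : Prop :=
  ∀ η : X, η ∈ F η

def RoughLim {X : Type*} [TopologicalSpace X] (I : Set (Set ℕ)) (F : X → Set X)
    (x : ℕ → X) : Set X :=
  {η : X | ∀ U : Set X, IsOpen U → F η ⊆ U → {n : ℕ | x n ∉ U} ∈ I}

def RoughLimStar {X : Type*} [TopologicalSpace X] (I : Set (Set ℕ)) (F : X → Set X)
    (x : ℕ → X) : Set X :=
  {η : X | ∃ S ∈ I, ∀ U : Set X, IsOpen U → F η ⊆ U → {n : ℕ | n ∉ S ∧ x n ∉ U}.Finite}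

def RoughCluster {X : Type*} [TopologicalSpace X] (I : Set (Set ℕ)) (F : X → Set X)
    (x : ℕ → X) : Set X :=
  {η : X | ∀ U : Set X, IsOpen U → F η ⊆ U → {n : ℕ | x n ∈ U} ∉ I}

def RoughLimitPts {X : Type*} [TopologicalSpace X] (I : Set (Set ℕ)) (F : X → Set X)
    (x : ℕ → X) : Set X :=
  {η : X | ∃ S : Set ℕ, S ∉ I ∧ ∀ U : Set X, IsOpen U → F η ⊆ U → {n ∈ S | x n ∉ U}.Finite}

def IClusterPts {X : Type*} [TopologicalSpace X] (I : Set (Set ℕ)) (x : ℕ → X) : Set X :=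
  RoughCluster I (fun η => {η}) x

def ILimitPts {X : Type*} [TopologicalSpace X] (I : Set (Set ℕ)) (x : ℕ → X) : Set X :=
  RoughLimitPts I (fun η => {η}) x

def IsPIdeal (I : Set (Set ℕ)) : Prop :=
  ∀ S : ℕ → Set ℕ, Monotone S → (∀ j, S j ∈ I) → ∃ T ∈ I, ∀ j, (S j \ T).Finite

def IsPPlusIdeal (I : Set (Set ℕ)) : Prop :=
  ∀ A : ℕ → Set ℕ, Antitone A → (∀ k, A k ∉ I) → ∃ B : Set ℕ, B ∉ I ∧ ∀ k, (B \ A k).Finite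

def HasUCProperty (X : Type*) [MetricSpace X] : Prop :=
  ∀ F G : Set X, IsClosed F → IsClosed G → F.Nonempty → G.Nonempty → Disjoint F G →
    ∃ ε : ℝ, 0 < ε ∧ ∀ x ∈ F, ∀ y ∈ G, ε < dist x y

def UpperVietorisContinuous {X : Type*} [TopologicalSpace X] (F : X → Set X) : Prop :=
  ∀ η : X, ∀ U : Set X, IsOpen U → F η ⊆ U →
    ∃ V : Set X, IsOpen V ∧ η ∈ V ∧ ∀ lam ∈ V, F lam ⊆ U

/-! Cluster points become a statement about filters. Let `l` be the filter dual to `I`. Then `η` is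
an `(I, F)`-cluster point iff the neighbourhood filter of the set `F η` meets `map x l`. Their
infimum contains `K`, so it has a cluster point `k` by compactness. Such a `k` is a cluster point of
`x` along `l`, and it is in the closure of `F η` because in a regular space every point outside
`closure s` is separated from `s` by disjoint neighbourhoods. -/

section Filters

variable {ι X : Type*} [TopologicalSpace X]

theorem nhdsSet_inf_map_neBot_iff {l : Filter ι} {x : ι → X} {s : Set X} :
    (𝓝ˢ s ⊓ map x l).NeBot ↔ ∀ U, IsOpen U → s ⊆ U → ∃ᶠ i in l, x i ∈ U := by
  rw [inf_neBot_iff_frequently_left]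
  constructor
  · intro hfreq U hU hsU
    exact hfreq (hU.mem_nhdsSet.2 hsU)
  · intro hfreq p hp
    obtain ⟨U, ⟨hU, hsU⟩, hUp⟩ := (hasBasis_nhdsSet s).eventually_iff.1 hp
    exact (hfreq U hU hsU).mono fun _ hi => hUp hi

theorem clusterPt_nhdsSet_iff_mem_closure [RegularSpace X] {s : Set X} {k : X} :
    ClusterPt k (𝓝ˢ s) ↔ k ∈ closure s := by
  rw [ClusterPt, neBot_iff, ne_eq, ← disjoint_iff, disjoint_nhds_nhdsSet, not_not]

theorem stmt3_general [RegularSpace X] {l : Filter ι} {x : ι → X} {K s : Set X}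
    (hK : IsCompact K) (hxK : ∀ᶠ i in l, x i ∈ K) (hs : (𝓝ˢ s ⊓ map x l).NeBot) :
    (closure s ∩ {k | MapClusterPt k l x}).Nonempty := by
  have hle : 𝓝ˢ s ⊓ map x l ≤ 𝓟 K := inf_le_right.trans (le_principal_iff.2 hxK)
  obtain ⟨k, -, hk⟩ := hK hle
  exact ⟨k, clusterPt_nhdsSet_iff_mem_closure.1 hk.of_inf_left, hk.of_inf_right⟩

end Filters

namespace IsIdeal

variable {I : Set (Set ℕ)}

/-- The filter dual to an ideal `I`, consisting of the complements of the members of `I`. A set is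
`I`-positive iff it is met frequently along this filter. -/
def dualFilter (hI : IsIdeal I) : Filter ℕ :=
  comk (· ∈ I) (hI.2.2.1 ∅ finite_empty) (fun t ht s hst => hI.1 s t hst ht)
    fun s hs t ht => hI.2.1 s t hs ht

theorem eventually_dualFilter (hI : IsIdeal I) {p : ℕ → Prop} :
    (∀ᶠ n in hI.dualFilter, p n) ↔ {n | ¬p n} ∈ I :=
  mem_comk

theorem frequently_dualFilter (hI : IsIdeal I) {p : ℕ → Prop} :
    (∃ᶠ n in hI.dualFilter, p n) ↔ {n | p n} ∉ I := by
  simp only [Filter.Frequently, eventually_dualFilter, not_not]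

variable {X : Type*} [TopologicalSpace X]

theorem mem_roughCluster_iff (hI : IsIdeal I) {F : X → Set X} {x : ℕ → X} {η : X} :
    η ∈ RoughCluster I F x ↔ (𝓝ˢ (F η) ⊓ map x hI.dualFilter).NeBot := by
  simp only [nhdsSet_inf_map_neBot_iff, frequently_dualFilter]
  rfl

theorem iClusterPts_eq_setOf_mapClusterPt (hI : IsIdeal I) {x : ℕ → X} :
    IClusterPts I x = {k | MapClusterPt k hI.dualFilter x} := by
  ext k
  rw [IClusterPts, hI.mem_roughCluster_iff, nhdsSet_singleton]
  rfl

end IsIdeal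

theorem stmt3 {X : Type*} [TopologicalSpace X] [RegularSpace X]
    (I : Set (Set ℕ)) (hI : IsIdeal I)
    (F : X → Set X) (hF : IsRoughFamily F) (x : ℕ → X)
    (K : Set X) (hK : IsCompact K) (hxK : {n : ℕ | x n ∉ K} ∈ I) :
    RoughCluster I F x ⊆ {η : X | (closure (F η) ∩ IClusterPts I x).Nonempty} := by
  intro η hη
  rw [mem_ofPred_eq, hI.iClusterPts_eq_setOf_mapClusterPt]
  exact stmt3_general hK (hI.eventually_dualFilter.2 hxK) (hI.mem_roughCluster_iff.1 hη)
end

section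
/- Let X = ℝ with its standard topology, let I be an ideal on ℕ, and let 𝓕 be a rough family on ℝ all of whose members are closed sets, uniformly bounded in the sense that there exists r ≥ 0 with F_η ⊆ [η − r, η + r] for all η ∈ ℝ, and such that the map η ↦ F_η is upper Vietoris continuous. Then c^b(I,𝓕) equals the closure of c^b(I*,𝓕) in ℓ∞. -/
open Set Filter Topology Metric

/-!
An `I`-convergent sequence `x` with rough limit `η` lies within `ε` of `F η` off a set of `I`;
replacing those terms by nearby points of `F η` gives an `I*`-convergent sequence at distance at
most `ε` from `x`. Conversely, let `u k → x` uniformly, with `e k` a rough limit of `u k`. Since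
`F (e k)` is within `r` of `e k`, the `e k` are bounded and subconverge to some `η`; by upper
Vietoris continuity `F (e k)` lies in any given neighbourhood of the compact set `F η` for
infinitely many `k`, so `η` is a rough limit of `x`.
-/

section Topological

variable {X : Type*} [TopologicalSpace X] {I : Set (Set ℕ)} {F : X → Set X} {x : ℕ → X}

theorem roughLimStar_subset_roughLim (hI : IsIdeal I) : RoughLimStar I F x ⊆ RoughLim I F x := by
  obtain ⟨mem_of_subset, union_mem, mem_of_finite, -⟩ := hI
  rintro η ⟨S, hS, hfin⟩ U hU hFU
  refine mem_of_subset _ _ (fun n hn => ?_) (union_mem _ _ hS (mem_of_finite _ (hfin U hU hFU)))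
  exact (em (n ∈ S)).imp_right fun hnS => ⟨hnS, hn⟩

theorem exists_apply_mem_of_mem_roughLim (hI : IsIdeal I) {η : X} (hη : η ∈ RoughLim I F x)
    {U : Set X} (hU : IsOpen U) (hFU : F η ⊆ U) : ∃ n, x n ∈ U := by
  obtain ⟨-, -, -, univ_notMem⟩ := hI
  by_contra! hx
  exact univ_notMem (eq_univ_of_forall hx ▸ hη U hU hFU)

end Topological

section Metric

variable {X : Type*} [PseudoMetricSpace X] {I : Set (Set ℕ)} {F : X → Set X} {x : ℕ → X}

theorem exists_dist_le_and_mem_roughLimStar {η : X} (hη : η ∈ RoughLim I F x) {ε : ℝ}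
    (hε : 0 < ε) : ∃ y : ℕ → X, (∀ n, dist (x n) (y n) ≤ ε) ∧ η ∈ RoughLimStar I F y := by
  have approx (n : ℕ) : ∃ z, dist (x n) z ≤ ε ∧ (x n ∈ thickening ε (F η) → z ∈ F η) := by
    by_cases hn : x n ∈ thickening ε (F η)
    · obtain ⟨z, hz, hxz⟩ := mem_thickening_iff.1 hn
      exact ⟨z, hxz.le, fun _ => hz⟩
    · exact ⟨x n, (dist_self _).trans_le hε.le, fun h => absurd h hn⟩
  choose y hxy hyF using approx
  refine ⟨y, hxy, {n | x n ∉ thickening ε (F η)},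
    hη _ isOpen_thickening (self_subset_thickening hε _), fun U _ hFU => ?_⟩
  have no_exception : {n | n ∉ {n | x n ∉ thickening ε (F η)} ∧ y n ∉ U} = ∅ :=
    eq_empty_of_forall_notMem fun n ⟨hn, hyU⟩ => hyU (hFU (hyF n (not_not.1 hn)))
  exact no_exception ▸ finite_empty

theorem roughLim_subset_ball (hI : IsIdeal I) {c : X} {R s : ℝ} (hx : ∀ n, x n ∈ closedBall c R)
    (hF : ∀ η, F η ⊆ ball η s) : RoughLim I F x ⊆ ball c (s + R) := by
  intro η hη
  obtain ⟨n, hn⟩ := exists_apply_mem_of_mem_roughLim hI hη isOpen_ball (hF η)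
  exact (dist_triangle η (x n) c).trans_lt (add_lt_add_of_lt_of_le (mem_ball'.1 hn) (hx n))

theorem mem_roughLim_of_tendstoUniformly (hI : IsIdeal I) (hF : UpperVietorisContinuous F)
    {ι : Type*} {l : Filter ι} [l.NeBot] {u : ι → ℕ → X} {e : ι → X} {η : X}
    (hFη : IsCompact (F η)) (hu : TendstoUniformly u x l) (he : Tendsto e l (𝓝 η))
    (heu : ∀ i, e i ∈ RoughLim I F (u i)) : η ∈ RoughLim I F x := by
  obtain ⟨mem_of_subset, -⟩ := hI
  intro U hU hFU
  obtain ⟨δ, hδ, hδU⟩ := hFη.exists_thickening_subset_open hU hFU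
  obtain ⟨V, hV, hηV, hVF⟩ :=
    hF η (thickening (δ / 2) (F η)) isOpen_thickening (self_subset_thickening (half_pos hδ) _)
  obtain ⟨i, hiV, hiu⟩ := ((he.eventually (hV.mem_nhds hηV)).and
    (tendstoUniformly_iff.1 hu (δ / 2) (half_pos hδ))).exists
  have x_mem_of_u_mem (n : ℕ) (hn : u i n ∈ thickening (δ / 2) (F η)) : x n ∈ U := by
    obtain ⟨z, hz, huz⟩ := mem_thickening_iff.1 hn
    refine hδU (mem_thickening_iff.2 ⟨z, hz, ?_⟩)
    calc dist (x n) z ≤ dist (x n) (u i n) + dist (u i n) z := dist_triangle ..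
      _ < δ / 2 + δ / 2 := add_lt_add (hiu n) huz
      _ = δ := add_halves δ
  exact mem_of_subset _ _ (fun n => mt (x_mem_of_u_mem n))
    (heu i _ isOpen_thickening (hVF (e i) hiV))

theorem nonempty_roughLim_of_tendstoUniformly [ProperSpace X] (hI : IsIdeal I)
    (hFcl : ∀ η, IsClosed (F η)) {r : ℝ} (hFr : ∀ η, F η ⊆ closedBall η r)
    (hF : UpperVietorisContinuous F) {u : ℕ → ℕ → X} (hu : TendstoUniformly u x atTop)
    (hx : Bornology.IsBounded (range x)) (hne : ∀ k, (RoughLim I F (u k)).Nonempty) :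
    (RoughLim I F x).Nonempty := by
  choose e he using hne
  obtain ⟨R, hR⟩ := hx.subset_closedBall (e 0)
  have hFball (η : X) : F η ⊆ ball η (r + 1) :=
    (hFr η).trans (closedBall_subset_ball (lt_add_one r))
  have e_mem_ball : ∀ᶠ k in atTop, e k ∈ ball (e 0) (r + 1 + (1 + R)) := by
    filter_upwards [tendstoUniformly_iff.1 hu 1 one_pos] with k hk
    refine roughLim_subset_ball hI (fun n => ?_) hFball (he k)
    exact (dist_triangle (u k n) (x n) (e 0)).trans
      (add_le_add (mem_ball'.1 (hk n)).le (hR (mem_range_self n)))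
  obtain ⟨η, -, φ, hφ, heη⟩ := tendsto_subseq_of_frequently_bounded isBounded_ball
    e_mem_ball.frequently
  have hFη : IsCompact (F η) := (isCompact_closedBall η r).of_isClosed_subset (hFcl η) (hFr η)
  have huφ : TendstoUniformly (u ∘ φ) x atTop := fun V hV => hφ.tendsto_atTop.eventually (hu V hV)
  exact ⟨η, mem_roughLim_of_tendstoUniformly hI hF hFη huφ heη fun k => he (φ k)⟩

end Metric

section BoundedSequences

theorem tendstoUniformly_coe_of_tendsto_lp_top {α ι E : Type*} [NormedAddCommGroup E]
    {l : Filter ι} {u : ι → lp (fun _ : α => E) ⊤} {x : lp (fun _ : α => E) ⊤}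
    (hu : Tendsto u l (𝓝 x)) : TendstoUniformly (fun i => ⇑(u i)) x l := by
  refine tendstoUniformly_iff.2 fun ε hε => ?_
  filter_upwards [hu.eventually (ball_mem_nhds x hε)] with i hi a
  calc dist (x a) (u i a) = ‖(x - u i) a‖ := dist_eq_norm ..
    _ ≤ ‖x - u i‖ := lp.norm_apply_le_norm ENNReal.top_ne_zero _ a
    _ = dist x (u i) := (dist_eq_norm ..).symm
    _ < ε := mem_ball'.1 hi

theorem exists_lp_top_coe_eq_and_dist_le {α : Type*} {E : α → Type*}
    [∀ a, NormedAddCommGroup (E a)] (x : lp E ⊤) {y : ∀ a, E a} {ε : ℝ} (hε : 0 ≤ ε)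
    (hxy : ∀ a, dist (x a) (y a) ≤ ε) : ∃ z : lp E ⊤, ⇑z = y ∧ dist x z ≤ ε := by
  have diff_mem : Memℓp (fun a => x a - y a) ⊤ :=
    memℓp_infty ⟨ε, forall_mem_range.2 fun a => dist_eq_norm (x a) (y a) ▸ hxy a⟩
  let d : lp E ⊤ := ⟨fun a => x a - y a, diff_mem⟩
  refine ⟨x - d, funext fun a => sub_sub_cancel (x a) (y a), ?_⟩
  rw [dist_eq_norm, sub_sub_cancel]
  exact lp.norm_le_of_forall_le hε fun a => dist_eq_norm (x a) (y a) ▸ hxy a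

theorem isBounded_range_coe_lp_top {α E : Type*} [NormedAddCommGroup E]
    (x : lp (fun _ : α => E) ⊤) : Bornology.IsBounded (range x) :=
  isBounded_iff_forall_norm_le.2
    ⟨‖x‖, forall_mem_range.2 (lp.norm_apply_le_norm ENNReal.top_ne_zero x)⟩

variable {E : Type*} [NormedAddCommGroup E] {I : Set (Set ℕ)} {F : E → Set E}

theorem setOf_nonempty_roughLim_subset_closure :
    {x : lp (fun _ : ℕ => E) ⊤ | (RoughLim I F x).Nonempty} ⊆
      closure {x : lp (fun _ : ℕ => E) ⊤ | (RoughLimStar I F x).Nonempty} := by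
  rintro x ⟨η, hη⟩
  refine (mem_closure_iff_nhds_basis nhds_basis_closedBall).2 fun ε hε => ?_
  obtain ⟨y, hxy, hηy⟩ := exists_dist_le_and_mem_roughLimStar hη hε
  obtain ⟨z, rfl, hxz⟩ := exists_lp_top_coe_eq_and_dist_le x hε.le hxy
  exact ⟨z, ⟨η, hηy⟩, mem_closedBall'.2 hxz⟩

theorem isClosed_setOf_nonempty_roughLim [ProperSpace E] (hI : IsIdeal I)
    (hFcl : ∀ η, IsClosed (F η)) {r : ℝ} (hFr : ∀ η, F η ⊆ closedBall η r)
    (hF : UpperVietorisContinuous F) :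
    IsClosed {x : lp (fun _ : ℕ => E) ⊤ | (RoughLim I F x).Nonempty} :=
  IsSeqClosed.isClosed fun _ x hne hux =>
    nonempty_roughLim_of_tendstoUniformly hI hFcl hFr hF
      (tendstoUniformly_coe_of_tendsto_lp_top hux) (isBounded_range_coe_lp_top x) hne

theorem stmt16_general [ProperSpace E] (hI : IsIdeal I) (hFcl : ∀ η, IsClosed (F η)) {r : ℝ}
    (hFr : ∀ η, F η ⊆ closedBall η r) (hF : UpperVietorisContinuous F) :
    {x : lp (fun _ : ℕ => E) ⊤ | (RoughLim I F x).Nonempty} =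
      closure {x : lp (fun _ : ℕ => E) ⊤ | (RoughLimStar I F x).Nonempty} :=
  setOf_nonempty_roughLim_subset_closure.antisymm <|
    closure_minimal (fun _ hx => hx.mono (roughLimStar_subset_roughLim hI))
      (isClosed_setOf_nonempty_roughLim hI hFcl hFr hF)

end BoundedSequences

theorem stmt16 (I : Set (Set ℕ)) (hI : IsIdeal I)
    (F : ℝ → Set ℝ) (hF : IsRoughFamily F) (hFcl : ∀ η : ℝ, IsClosed (F η))
    (r : ℝ) (hr : 0 ≤ r) (hbd : ∀ η : ℝ, F η ⊆ Set.Icc (η - r) (η + r))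
    (hcont : UpperVietorisContinuous F) :
    {x : lp (fun _ : ℕ => ℝ) ⊤ | (RoughLim I F (fun n => x n)).Nonempty} =
      closure {x : lp (fun _ : ℕ => ℝ) ⊤ | (RoughLimStar I F (fun n => x n)).Nonempty} :=
  stmt16_general hI hFcl (fun η => (hbd η).trans_eq Real.closedBall_eq_Icc.symm) hcont
end
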